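/- Let m ≥ n ≥ 1 and m ≥ s ≥ r ≥ 0 with n ≥ r be integers, let c ≥ 0 be a real number, and let A be an m×n real matrix. Let Q be a random s×r real matrix satisfying minor-orthogonality: for all S, U ⊆ {1,…,s} and T, V ⊆ {1,…,r} with |S| = |T| = k and |U| = |V| = ℓ, E[[Q]_{S,T}·[Q]_{U,V}] = (1/binom(s,k))·1_{S=U}·1_{T=V}. Let Q̃ denote the m×n matrix with Q in its top-left s×r block and zeros elsewhere. Writing E[ det( x·I_n + (A + √c·Q̃)ᵀ(A + √c·Q̃) ) ] = Σ_{i=0}^n x^{n−i} c_i(A), one has c_i(A) = Σ_{j,p,q} [ binom(s−p, i−j)·binom(r−q, i−j) / binom(s, i−j) ] · c^{i−j} · A^j_{p,q}, where A^j_{p,q} = Σ [A]_{X,Y}² with the sum over X ⊆ {1,…,m}, Y ⊆ {1,…,n} with |X| = |Y| = j, |X ∩ {1,…,s}| = p, and |Y ∩ {1,…,r}| = q. -/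

import Mathlib

open Polynomial Matrix MeasureTheory

noncomputable instance matMeasurableSpace (m n : ℕ) :
    MeasurableSpace (Matrix (Fin m) (Fin n) ℝ) :=
  MeasurableSpace.pi

/-- The minor `[C]_{S,T}` : the determinant of the submatrix of `C` with rows indexed by
`S` and columns by `T` (in increasing order); junk value `0` if `|S| ≠ |T|`, and the empty
minor equals `1`. -/
noncomputable def minor {m n : ℕ} (C : Matrix (Fin m) (Fin n) ℝ)
    (S : Finset (Fin m)) (T : Finset (Fin n)) : ℝ :=
  if h : S.card = T.card then
    (Matrix.of fun (i j : Fin S.card) =>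
      C (S.orderEmbOfFin rfl i) (T.orderEmbOfFin h.symm j)).det
  else 0

/-- A random `s × t` real matrix (given by its distribution `μ`) is *minor-orthogonal* if
`E[[Q]_{S,T}·[Q]_{U,V}] = 1_{S=U}·1_{T=V} / binom(s,|S|)` for all index sets with
`|S| = |T|` and `|U| = |V|`. -/
def MinorOrthogonal {s t : ℕ} (μ : Measure (Matrix (Fin s) (Fin t) ℝ)) : Prop :=
  ∀ (S U : Finset (Fin s)) (T V : Finset (Fin t)),
    S.card = T.card → U.card = V.card →
    ∫ Q, minor Q S T * minor Q U V ∂μ =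
      if S = U ∧ T = V then ((s.choose S.card : ℕ) : ℝ)⁻¹ else 0

/-- `A^j_{p,q} = Σ [A]_{X,Y}²`, the sum over row sets `X` and column sets `Y` with
`|X| = |Y| = j`, `|X ∩ {1,…,s}| = p` and `|Y ∩ {1,…,r}| = q`. -/
noncomputable def Apq {m n : ℕ} (A : Matrix (Fin m) (Fin n) ℝ) (s r j p q : ℕ) : ℝ :=
  ∑ X : Finset (Fin m), ∑ Y : Finset (Fin n),
    if X.card = j ∧ Y.card = j ∧
        (X.filter (fun i : Fin m => (i : ℕ) < s)).card = p ∧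
        (Y.filter (fun i : Fin n => (i : ℕ) < r)).card = q then
      (minor A X Y) ^ 2
    else 0

/-- The `m × n` matrix with the `s × r` matrix `Q` in its top-left block and zeros
elsewhere. -/
def topLeft {m n s r : ℕ} (Q : Matrix (Fin s) (Fin r) ℝ) : Matrix (Fin m) (Fin n) ℝ :=
  Matrix.of fun i j =>
    if hi : (i : ℕ) < s then if hj : (j : ℕ) < r then Q ⟨i, hi⟩ ⟨j, hj⟩ else 0 else 0

/-- `det(x·I + N)` as a polynomial in `x`. -/
noncomputable def detXI {n : ℕ} (N : Matrix (Fin n) (Fin n) ℝ) : Polynomial ℝ :=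
  Matrix.det ((Polynomial.X : Polynomial ℝ) • (1 : Matrix (Fin n) (Fin n) (Polynomial ℝ)) +
    N.map Polynomial.C)

/-!
By Cauchy–Binet, the coefficient of `x ^ (n - i)` in `det(x·I + BᵀB)` is the sum of the squares of
the `i × i` minors of `B`. For `B = A + √c·Q̃`, Laplace expansion writes `[B]_{X,Y}` as a signed sum
of products `[A]_{P,T} · [√c·Q̃]_{X∖P,Y∖T}`. Distinct pairs `(P, T)` give distinct complementary
minors of `Q̃`, which are orthogonal in `L²`; hence the expectation of `[B]_{X,Y}²` is the sum of
the expected squares of the terms, and the signs never matter. A term survives only if `X∖P` and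
`Y∖T` lie in the top-left block, so the coefficient of `[A]_{P,T}²` counts the choices of `i - j`
further rows and columns of that block, outside `P` and `T`.
-/

section Minors

variable {m n : ℕ}

lemma minor_of_card_ne (C : Matrix (Fin m) (Fin n) ℝ) {S : Finset (Fin m)} {T : Finset (Fin n)}
    (h : S.card ≠ T.card) : minor C S T = 0 :=
  dif_neg h

lemma minor_eq_det_submatrix {k : ℕ} (C : Matrix (Fin m) (Fin n) ℝ) {S : Finset (Fin m)}
    {T : Finset (Fin n)} (hS : S.card = k) (hT : T.card = k) :
    minor C S T = (C.submatrix (S.orderEmbOfFin hS) (T.orderEmbOfFin hT)).det := by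
  subst hS
  exact dif_pos hT.symm

lemma minor_map_univ {k : ℕ} (C : Matrix (Fin m) (Fin n) ℝ) (f : Fin k ↪o Fin m)
    (g : Fin k ↪o Fin n) :
    minor C (Finset.univ.map f.toEmbedding) (Finset.univ.map g.toEmbedding) =
      (C.submatrix f g).det := by
  rw [minor_eq_det_submatrix C (k := k) (by simp) (by simp),
    ← Finset.orderEmbOfFin_unique' (f := f) _ (by simp),
    ← Finset.orderEmbOfFin_unique' (f := g) _ (by simp)]

lemma exists_orderEmb_map_univ_eq {S : Finset (Fin m)} {T : Finset (Fin n)}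
    (h : S.card = T.card) :
    ∃ (k : ℕ) (f : Fin k ↪o Fin m) (g : Fin k ↪o Fin n),
      Finset.univ.map f.toEmbedding = S ∧ Finset.univ.map g.toEmbedding = T :=
  ⟨S.card, S.orderEmbOfFin rfl, T.orderEmbOfFin h.symm, by simp, by simp⟩

lemma minor_map {a b : ℕ} (C : Matrix (Fin m) (Fin n) ℝ) (f : Fin a ↪o Fin m)
    (g : Fin b ↪o Fin n) (S : Finset (Fin a)) (T : Finset (Fin b)) :
    minor C (S.map f.toEmbedding) (T.map g.toEmbedding) = minor (C.submatrix f g) S T := by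
  by_cases h : S.card = T.card
  · obtain ⟨k, f', g', rfl, rfl⟩ := exists_orderEmb_map_univ_eq h
    rw [minor_map_univ, submatrix_submatrix, Finset.map_map, Finset.map_map]
    exact minor_map_univ C (f'.trans f) (g'.trans g)
  · rw [minor_of_card_ne _ (by simpa using h), minor_of_card_ne _ h]

lemma minor_smul (a : ℝ) (C : Matrix (Fin m) (Fin n) ℝ) (S : Finset (Fin m))
    (T : Finset (Fin n)) : minor (a • C) S T = a ^ S.card * minor C S T := by
  by_cases h : S.card = T.card
  · obtain ⟨k, f, g, rfl, rfl⟩ := exists_orderEmb_map_univ_eq h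
    rw [minor_map_univ, minor_map_univ, submatrix_smul, Pi.smul_apply, Pi.smul_apply, det_smul]
    simp
  · simp [minor_of_card_ne _ h]

lemma minor_transpose (C : Matrix (Fin m) (Fin n) ℝ) (S : Finset (Fin m)) (T : Finset (Fin n)) :
    minor Cᵀ T S = minor C S T := by
  by_cases h : S.card = T.card
  · obtain ⟨k, f, g, rfl, rfl⟩ := exists_orderEmb_map_univ_eq h
    rw [minor_map_univ, minor_map_univ, ← transpose_submatrix, det_transpose]
  · rw [minor_of_card_ne _ h, minor_of_card_ne _ (Ne.symm h)]

lemma minor_eq_zero_of_row_eq_zero (C : Matrix (Fin m) (Fin n) ℝ) {S : Finset (Fin m)}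
    (T : Finset (Fin n)) {i : Fin m} (hi : i ∈ S) (h : ∀ j, C i j = 0) : minor C S T = 0 := by
  by_cases hc : S.card = T.card
  · obtain ⟨k, f, g, rfl, rfl⟩ := exists_orderEmb_map_univ_eq hc
    obtain ⟨a, -, rfl⟩ := Finset.mem_map.mp hi
    rw [minor_map_univ]
    exact det_eq_zero_of_row_eq_zero a fun j => h (g j)
  · exact minor_of_card_ne _ hc

lemma minor_eq_zero_of_column_eq_zero (C : Matrix (Fin m) (Fin n) ℝ) (S : Finset (Fin m))
    {T : Finset (Fin n)} {j : Fin n} (hj : j ∈ T) (h : ∀ i, C i j = 0) : minor C S T = 0 := by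
  rw [← minor_transpose]
  exact minor_eq_zero_of_row_eq_zero Cᵀ S hj h

lemma minor_eq_zero_of_not_subset {C : Matrix (Fin m) (Fin n) ℝ} {I S : Finset (Fin m)}
    {J T : Finset (Fin n)} (hrow : ∀ i ∉ I, ∀ j, C i j = 0) (hcol : ∀ j ∉ J, ∀ i, C i j = 0)
    (h : ¬ (S ⊆ I ∧ T ⊆ J)) : minor C S T = 0 := by
  rcases not_and_or.mp h with h | h
  · obtain ⟨i, hi, hiI⟩ := Finset.not_subset.mp h
    exact minor_eq_zero_of_row_eq_zero C T hi (hrow i hiI)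
  · obtain ⟨j, hj, hjJ⟩ := Finset.not_subset.mp h
    exact minor_eq_zero_of_column_eq_zero C S hj (hcol j hjJ)

lemma measurable_minor (S : Finset (Fin m)) (T : Finset (Fin n)) :
    Measurable fun C : Matrix (Fin m) (Fin n) ℝ => minor C S T := by
  by_cases h : S.card = T.card
  · simp only [minor, dif_pos h, det_apply', of_apply]
    refine Finset.measurable_sum _ fun σ _ => Measurable.const_mul ?_ _
    refine Finset.measurable_prod _ fun i _ => ?_
    exact (measurable_pi_apply _).comp (measurable_pi_apply _)
  · simp only [minor, dif_neg h]
    exact measurable_const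

end Minors

section CauchyBinet

lemma det_mul_eq_sum_prod_mul_det {R ι κ : Type*} [CommRing R] [Fintype ι] [DecidableEq ι]
    [Fintype κ] (C : Matrix ι κ R) (D : Matrix κ ι R) :
    (C * D).det = ∑ f : ι → κ, (∏ i, C i (f i)) * (D.submatrix f id).det := by
  have hrow : C * D = fun i => ∑ a, C i a • D a := by
    ext i j
    simp [mul_apply]
  rw [hrow]
  refine ((detRowAlternating (n := ι) (R := R)).toMultilinearMap.map_sum
    fun i a => C i a • D a).trans (Finset.sum_congr rfl fun f _ => ?_)
  exact (detRowAlternating (n := ι) (R := R)).toMultilinearMap.map_smul_univ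
    (fun i => C i (f i)) fun i => D (f i)

variable {R κ : Type*} [CommRing R] [LinearOrder κ] {k : ℕ}

lemma exists_orderEmb_comp_perm_eq {f : Fin k → κ} (hf : f.Injective) :
    ∃ (e : Fin k ↪o κ) (σ : Equiv.Perm (Fin k)), e ∘ σ = f := by
  have hmono : StrictMono (f ∘ Tuple.sort f) :=
    (Tuple.monotone_sort f).strictMono_of_injective (hf.comp (Tuple.sort f).injective)
  refine ⟨OrderEmbedding.ofStrictMono _ hmono, (Tuple.sort f).symm, funext fun i => ?_⟩
  simp

lemma orderEmb_comp_perm_injective :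
    Function.Injective fun p : (Fin k ↪o κ) × Equiv.Perm (Fin k) => (p.1 ∘ p.2 : Fin k → κ) := by
  rintro ⟨e, σ⟩ ⟨e', σ'⟩ h
  have hrange : Set.range e = Set.range e' := by
    simpa [Set.range_comp, σ.range_eq_univ, σ'.range_eq_univ] using congrArg Set.range h
  obtain rfl : e = e' := DFunLike.coe_injective
    ((e.strictMono.range_inj e'.strictMono).mp hrange)
  obtain rfl : σ = σ' := Equiv.ext fun i => e.injective (congrFun h i)
  rfl

variable [Fintype κ]

lemma sum_eq_sum_orderEmb_comp_perm {M : Type*} [AddCommMonoid M] (F : (Fin k → κ) → M)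
    (hF : ∀ f, ¬ f.Injective → F f = 0) :
    ∑ f, F f = ∑ e : Fin k ↪o κ, ∑ σ : Equiv.Perm (Fin k), F (e ∘ σ) := by
  rw [← Fintype.sum_prod_type']
  refine (Finset.sum_of_injOn _ orderEmb_comp_perm_injective.injOn (by simp)
    (fun f _ hf => hF f fun hinj => hf ?_) fun _ _ => rfl).symm
  obtain ⟨e, σ, rfl⟩ := exists_orderEmb_comp_perm_eq hinj
  exact ⟨(e, σ), by simp, rfl⟩

theorem det_mul_eq_sum_orderEmb (C : Matrix (Fin k) κ R) (D : Matrix κ (Fin k) R) :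
    (C * D).det = ∑ e : Fin k ↪o κ, (C.submatrix id e).det * (D.submatrix e id).det := by
  rw [det_mul_eq_sum_prod_mul_det, sum_eq_sum_orderEmb_comp_perm]
  · refine Finset.sum_congr rfl fun e _ => ?_
    rw [← det_transpose (C.submatrix id e), det_apply', Finset.sum_mul]
    refine Finset.sum_congr rfl fun σ _ => ?_
    have hperm : (D.submatrix (e ∘ σ) id).det =
        (Equiv.Perm.sign σ : ℤ) * (D.submatrix e id).det := det_permute σ (D.submatrix e id)
    rw [hperm]
    simp only [Function.comp_apply, transpose_apply, submatrix_apply, id_eq]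
    ring
  · intro f hf
    obtain ⟨i, j, hij, hne⟩ : ∃ i j, f i = f j ∧ i ≠ j := by
      simpa [Function.Injective] using hf
    rw [det_zero_of_row_eq hne (by ext; simp [hij]), mul_zero]

lemma sum_powersetCard_univ_eq_sum_orderEmb {M : Type*} [AddCommMonoid M] (F : Finset κ → M) :
    ∑ X ∈ Finset.univ.powersetCard k, F X =
      ∑ e : Fin k ↪o κ, F (Finset.univ.map e.toEmbedding) := by
  refine (Finset.sum_of_injOn (fun e : Fin k ↪o κ => Finset.univ.map e.toEmbedding)
    (fun e _ e' _ h => ?_) (fun e _ => by simp) (fun X hX hX' => absurd ?_ hX')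
    fun _ _ => rfl).symm
  · have hrange : Set.range e = Set.range e' := by
      simpa using congrArg ((↑) : Finset κ → Set κ) h
    exact DFunLike.coe_injective ((e.strictMono.range_inj e'.strictMono).mp hrange)
  · exact ⟨X.orderEmbOfFin (Finset.mem_powersetCard.mp hX).2, by simp, by simp⟩

lemma minor_transpose_mul_self {m n : ℕ} (B : Matrix (Fin m) (Fin n) ℝ) (Y : Finset (Fin n)) :
    minor (Bᵀ * B) Y Y = ∑ X ∈ Finset.univ.powersetCard Y.card, minor B X Y ^ 2 := by
  obtain ⟨k, g, -, rfl, -⟩ := exists_orderEmb_map_univ_eq (rfl : Y.card = Y.card)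
  rw [minor_map_univ, submatrix_mul _ _ _ id _ Function.bijective_id, det_mul_eq_sum_orderEmb,
    Finset.card_map, Finset.card_fin, sum_powersetCard_univ_eq_sum_orderEmb]
  refine Finset.sum_congr rfl fun e _ => ?_
  rw [minor_map_univ, sq]
  congr 1
  exact det_transpose (B.submatrix e g)

lemma detXI_eq_charpoly_neg {n : ℕ} (N : Matrix (Fin n) (Fin n) ℝ) :
    detXI N = (-N).charpoly := by
  rw [detXI, charpoly, charmatrix, smul_one_eq_diagonal, scalar_apply, ← RingHom.mapMatrix_apply,
    map_neg, sub_neg_eq_add]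

lemma detXI_coeff {n : ℕ} (N : Matrix (Fin n) (Fin n) ℝ) {i : ℕ} (hi : i ≤ n) :
    (detXI N).coeff (n - i) = ∑ Y ∈ Finset.univ.powersetCard i, minor N Y Y := by
  have hcoeff := charpoly_coeff_eq_sum_minors (-N) i (by rwa [Fintype.card_fin])
  rw [Fintype.card_fin] at hcoeff
  rw [detXI_eq_charpoly_neg, hcoeff, Finset.mul_sum]
  refine Finset.sum_congr rfl fun Y hY => ?_
  have hYi : Y.card = i := (Finset.mem_powersetCard.mp hY).2
  rw [submatrix_neg, Pi.neg_apply, Pi.neg_apply, det_neg, Fintype.card_coe, hYi,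
    ← mul_assoc, ← mul_pow, minor_eq_det_submatrix N hYi hYi,
    ← det_submatrix_equiv_self (Y.orderIsoOfFin hYi).toEquiv, neg_one_mul, neg_neg, one_pow,
    one_mul]
  rfl

lemma detXI_transpose_mul_self_coeff {m n : ℕ} (B : Matrix (Fin m) (Fin n) ℝ) {i : ℕ}
    (hi : i ≤ n) :
    (detXI (Bᵀ * B)).coeff (n - i) =
      ∑ X ∈ Finset.univ.powersetCard i, ∑ Y ∈ Finset.univ.powersetCard i, minor B X Y ^ 2 := by
  rw [detXI_coeff _ hi, Finset.sum_comm]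
  refine Finset.sum_congr rfl fun Y hY => ?_
  rw [minor_transpose_mul_self, (Finset.mem_powersetCard.mp hY).2]

end CauchyBinet

section Laplace

variable {R ι : Type*}

/-- The matrix with the entries of `M` on `P × T`, those of `N` on `Pᶜ × Tᶜ`, and zeros elsewhere:
the summand of the Laplace expansion of `det (M + N)` which takes the rows `P` and the columns `T`
from `M`. -/
def blockMix [Zero R] [DecidableEq ι] (M N : Matrix ι ι R) (P T : Finset ι) : Matrix ι ι R :=
  Matrix.of fun i j =>
    if i ∈ P then if j ∈ T then M i j else 0 else if j ∈ T then 0 else N i j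

lemma blockMix_submatrix_finSumEquivOfFinset [Zero R] [Fintype ι] [LinearOrder ι] {a b : ℕ}
    (M N : Matrix ι ι R) {P T : Finset ι} (hP : P.card = a) (hP' : Pᶜ.card = b)
    (hT : T.card = a) (hT' : Tᶜ.card = b) :
    (blockMix M N P T).submatrix (finSumEquivOfFinset hP hP') (finSumEquivOfFinset hT hT') =
      fromBlocks (M.submatrix (P.orderEmbOfFin hP) (T.orderEmbOfFin hT)) 0 0
        (N.submatrix (Pᶜ.orderEmbOfFin hP') (Tᶜ.orderEmbOfFin hT')) := by
  have hrow : ∀ i, Pᶜ.orderEmbOfFin hP' i ∉ P := fun i =>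
    Finset.mem_compl.mp (Finset.orderEmbOfFin_mem _ _ _)
  have hcol : ∀ j, Tᶜ.orderEmbOfFin hT' j ∉ T := fun j =>
    Finset.mem_compl.mp (Finset.orderEmbOfFin_mem _ _ _)
  ext (i | i) (j | j) <;> simp [blockMix, hrow, hcol]

variable [CommRing R] [Fintype ι]

lemma prod_blockMix [DecidableEq ι] (M N : Matrix ι ι R) (P T : Finset ι) (σ : Equiv.Perm ι) :
    ∏ i, blockMix M N P T (σ i) i =
      if P = T.map σ.toEmbedding then (∏ i ∈ T, M (σ i) i) * ∏ i ∈ Tᶜ, N (σ i) i else 0 := by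
  split_ifs with h
  · subst h
    rw [← Finset.prod_mul_prod_compl T]
    congr 1
    · exact Finset.prod_congr rfl fun i hi => by simp [blockMix, hi]
    · exact Finset.prod_congr rfl fun i hi => by simp [blockMix, Finset.mem_compl.mp hi]
  · obtain ⟨i, hi⟩ : ∃ i, ¬ (σ i ∈ P ↔ i ∈ T) := by
      by_contra! hiff
      refine h (Finset.ext fun a => ?_)
      rw [← σ.apply_symm_apply a, hiff]
      simp
    refine Finset.prod_eq_zero (Finset.mem_univ i) ?_
    simp only [blockMix, of_apply]
    split_ifs <;> simp_all

lemma det_add_eq_sum_det_blockMix [DecidableEq ι] (M N : Matrix ι ι R) :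
    (M + N).det = ∑ P : Finset ι, ∑ T : Finset ι, (blockMix M N P T).det := by
  simp only [det_apply', prod_blockMix]
  rw [Finset.sum_comm]
  simp_rw [Finset.sum_comm (s := (Finset.univ : Finset (Finset ι)))
    (t := (Finset.univ : Finset (Equiv.Perm ι)))]
  refine Finset.sum_congr rfl fun σ _ => ?_
  simp [Fintype.prod_add, Finset.mul_sum]

lemma det_blockMix_of_card_ne [DecidableEq ι] (M N : Matrix ι ι R) {P T : Finset ι}
    (h : P.card ≠ T.card) : (blockMix M N P T).det = 0 := by
  rw [det_apply']
  refine Finset.sum_eq_zero fun σ _ => ?_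
  rw [prod_blockMix, if_neg, mul_zero]
  rintro rfl
  simp at h

lemma det_eq_sign_mul_det_submatrix {κ : Type*} [DecidableEq ι] [Fintype κ] [DecidableEq κ]
    (e f : κ ≃ ι) (M : Matrix ι ι R) :
    M.det = (Equiv.Perm.sign (e.symm.trans f) : ℤ) * (M.submatrix e f).det := by
  have hperm : (M.submatrix e f).det = (Equiv.Perm.sign (e.symm.trans f) : ℤ) * M.det := by
    rw [← det_permute' (e.symm.trans f) M, ← det_submatrix_equiv_self e]
    simp [submatrix_submatrix, Function.comp_def]
  rw [hperm, ← mul_assoc, ← Int.cast_mul, Int.units_coe_mul_self, Int.cast_one, one_mul]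

lemma exists_sign_det_blockMix_eq {k : ℕ} (P T : Finset (Fin k)) :
    ∃ ε : ℤˣ, ∀ M N : Matrix (Fin k) (Fin k) ℝ,
      (blockMix M N P T).det = (ε : ℤ) * (minor M P T * minor N Pᶜ Tᶜ) := by
  by_cases h : P.card = T.card
  · have h' : Pᶜ.card = Tᶜ.card := by simp [Finset.card_compl, h]
    let e := finSumEquivOfFinset (s := P) rfl rfl
    let f := finSumEquivOfFinset (s := T) h.symm h'.symm
    refine ⟨Equiv.Perm.sign (e.symm.trans f), fun M N => ?_⟩
    rw [det_eq_sign_mul_det_submatrix e f, blockMix_submatrix_finSumEquivOfFinset,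
      det_fromBlocks_zero₂₁, ← minor_eq_det_submatrix, ← minor_eq_det_submatrix]
  · exact ⟨1, fun M N => by rw [det_blockMix_of_card_ne _ _ h, minor_of_card_ne _ h]; simp⟩

lemma sum_powerset_map {α β M : Type*} [AddCommMonoid M] (f : α ↪ β) (S : Finset α)
    (F : Finset β → M) : ∑ X ∈ (S.map f).powerset, F X = ∑ P ∈ S.powerset, F (P.map f) := by
  refine (Finset.sum_of_injOn (Finset.map f) (Finset.map_injective f).injOn
    (fun P hP => Finset.mem_coe.mpr <| Finset.mem_powerset.mpr <|
      Finset.map_subset_map.mpr <| Finset.mem_powerset.mp hP)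
    (fun X hX hX' => absurd ?_ hX') fun _ _ => rfl).symm
  obtain ⟨P, hP, rfl⟩ := Finset.subset_map_iff.mp (Finset.mem_powerset.mp hX)
  exact ⟨P, Finset.mem_coe.mpr (Finset.mem_powerset.mpr hP), rfl⟩

theorem exists_sign_minor_add_eq {m n : ℕ} (X : Finset (Fin m)) (Y : Finset (Fin n)) :
    ∃ ε : Finset (Fin m) → Finset (Fin n) → ℤˣ, ∀ A B : Matrix (Fin m) (Fin n) ℝ,
      minor (A + B) X Y = ∑ P ∈ X.powerset, ∑ T ∈ Y.powerset,
        (ε P T : ℤ) * (minor A P T * minor B (X \ P) (Y \ T)) := by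
  by_cases h : X.card = Y.card
  · obtain ⟨k, f, g, rfl, rfl⟩ := exists_orderEmb_map_univ_eq h
    choose ε hε using fun P T : Finset (Fin k) => exists_sign_det_blockMix_eq P T
    refine ⟨fun P T => ε (P.preimage f f.injective.injOn) (T.preimage g g.injective.injOn),
      fun A B => ?_⟩
    rw [minor_map_univ, submatrix_add, Pi.add_apply, Pi.add_apply, det_add_eq_sum_det_blockMix,
      sum_powerset_map, Finset.powerset_univ]
    refine Finset.sum_congr rfl fun P _ => ?_
    rw [sum_powerset_map, Finset.powerset_univ]
    refine Finset.sum_congr rfl fun T _ => ?_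
    have hP : (P.map f.toEmbedding).preimage f f.injective.injOn = P :=
      Finset.preimage_map f.toEmbedding P
    have hT : (T.map g.toEmbedding).preimage g g.injective.injOn = T :=
      Finset.preimage_map g.toEmbedding T
    beta_reduce
    rw [hε, hP, hT, ← Finset.map_sdiff, ← Finset.map_sdiff, minor_map, minor_map,
      ← Finset.compl_eq_univ_sdiff, ← Finset.compl_eq_univ_sdiff]
  · refine ⟨1, fun A B => ?_⟩
    rw [minor_of_card_ne _ h]
    refine (Finset.sum_eq_zero fun P hP => Finset.sum_eq_zero fun T hT => ?_).symm
    by_cases hPT : P.card = T.card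
    · have hsdiff : (X \ P).card ≠ (Y \ T).card := by
        have := Finset.card_sdiff_add_card_eq_card (Finset.mem_powerset.mp hP)
        have := Finset.card_sdiff_add_card_eq_card (Finset.mem_powerset.mp hT)
        omega
      rw [minor_of_card_ne B hsdiff, mul_zero, mul_zero]
    · rw [minor_of_card_ne A hPT, zero_mul, mul_zero]

end Laplace

section Moments

lemma integral_sq_sum_of_pairwise_orthogonal {Ω ι : Type*} [MeasurableSpace Ω] {μ : Measure Ω}
    {t : Finset ι} {f : ι → Ω → ℝ} (hf : ∀ i ∈ t, MemLp (f i) 2 μ)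
    (horth : (t : Set ι).Pairwise fun i j => ∫ ω, f i ω * f j ω ∂μ = 0) :
    ∫ ω, (∑ i ∈ t, f i ω) ^ 2 ∂μ = ∑ i ∈ t, ∫ ω, f i ω ^ 2 ∂μ := by
  have hint : ∀ i ∈ t, ∀ j ∈ t, Integrable (fun ω => f i ω * f j ω) μ :=
    fun i hi j hj => (hf i hi).integrable_mul (hf j hj)
  simp_rw [sq, Finset.sum_mul_sum]
  rw [integral_finsetSum _ fun i hi => integrable_finsetSum _ (hint i hi)]
  refine Finset.sum_congr rfl fun i hi => ?_
  rw [integral_finsetSum _ (hint i hi)]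
  exact Finset.sum_eq_single_of_mem i hi fun j hj hji => horth hi hj hji.symm

variable {Ω : Type*} [MeasurableSpace Ω] {μ : Measure Ω} {m n : ℕ}

/-- The minors of the random matrix `B` are square-integrable and pairwise orthogonal in `L²`, with
second moments `E[[B]_{S,T}²] = w S T`. Unlike in `MinorOrthogonal`, the index sets range over all
pairs, so `w` vanishes on pairs of unequal cardinality. -/
structure HasOrthogonalMinors (B : Ω → Matrix (Fin m) (Fin n) ℝ)
    (w : Finset (Fin m) → Finset (Fin n) → ℝ) (μ : Measure Ω) : Prop where
  memLp : ∀ S T, MemLp (fun ω => minor (B ω) S T) 2 μ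
  integral_mul : ∀ S U T V,
    ∫ ω, minor (B ω) S T * minor (B ω) U V ∂μ = if S = U ∧ T = V then w S T else 0

namespace HasOrthogonalMinors

variable {B : Ω → Matrix (Fin m) (Fin n) ℝ} {w : Finset (Fin m) → Finset (Fin n) → ℝ}

lemma integral_sq (hB : HasOrthogonalMinors B w μ) (S : Finset (Fin m)) (T : Finset (Fin n)) :
    ∫ ω, minor (B ω) S T ^ 2 ∂μ = w S T := by
  simp_rw [sq, hB.integral_mul, and_self, if_true]

lemma const_smul (hB : HasOrthogonalMinors B w μ) (a : ℝ) :
    HasOrthogonalMinors (fun ω => a • B ω) (fun S T => (a ^ 2) ^ S.card * w S T) μ where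
  memLp S T := by
    simp_rw [minor_smul]
    exact (hB.memLp S T).const_mul _
  integral_mul S U T V := by
    simp_rw [minor_smul, mul_mul_mul_comm (a ^ _) _ (a ^ _)]
    rw [integral_const_mul, hB.integral_mul]
    split_ifs with h
    · rw [← h.1, ← mul_pow, ← sq]
    · rw [mul_zero]

lemma of_submatrix {a b : ℕ} (f : Fin a ↪o Fin m) (g : Fin b ↪o Fin n)
    {w₀ : Finset (Fin a) → Finset (Fin b) → ℝ}
    (hB : HasOrthogonalMinors (fun ω => (B ω).submatrix f g) w₀ μ)
    (hrow : ∀ ω, ∀ i ∉ Finset.univ.map f.toEmbedding, ∀ j, B ω i j = 0)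
    (hcol : ∀ ω, ∀ j ∉ Finset.univ.map g.toEmbedding, ∀ i, B ω i j = 0)
    (hw : ∀ S T, w (S.map f.toEmbedding) (T.map g.toEmbedding) = w₀ S T)
    (hw_zero : ∀ S T, ¬ (S ⊆ Finset.univ.map f.toEmbedding ∧ T ⊆ Finset.univ.map g.toEmbedding) →
      w S T = 0) :
    HasOrthogonalMinors B w μ := by
  have hcases : ∀ S T,
      (∃ (S' : Finset (Fin a)) (T' : Finset (Fin b)),
        S'.map f.toEmbedding = S ∧ T'.map g.toEmbedding = T) ∨
      (∀ ω, minor (B ω) S T = 0) ∧ w S T = 0 := by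
    intro S T
    by_cases h : S ⊆ Finset.univ.map f.toEmbedding ∧ T ⊆ Finset.univ.map g.toEmbedding
    · obtain ⟨S', -, rfl⟩ := Finset.subset_map_iff.mp h.1
      obtain ⟨T', -, rfl⟩ := Finset.subset_map_iff.mp h.2
      exact .inl ⟨S', T', rfl, rfl⟩
    · exact .inr ⟨fun ω => minor_eq_zero_of_not_subset (hrow ω) (hcol ω) h, hw_zero S T h⟩
  refine ⟨fun S T => ?_, fun S U T V => ?_⟩
  · obtain ⟨S, T, rfl, rfl⟩ | ⟨hST, -⟩ := hcases S T
    · simpa only [minor_map] using hB.memLp S T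
    · simp [hST]
  · obtain ⟨S, T, rfl, rfl⟩ | ⟨hST, hwST⟩ := hcases S T
    · obtain ⟨U, V, rfl, rfl⟩ | ⟨hUV, hwUV⟩ := hcases U V
      · simpa only [minor_map, hw, Finset.map_inj] using hB.integral_mul S U T V
      · have hw_eq : S.map f.toEmbedding = U ∧ T.map g.toEmbedding = V →
            0 = w (S.map f.toEmbedding) (T.map g.toEmbedding) := by
          rintro ⟨rfl, rfl⟩
          exact hwUV.symm
        simpa [hUV] using hw_eq
    · simp [hST, hwST]

lemma memLp_minor_add (hB : HasOrthogonalMinors B w μ) (A : Matrix (Fin m) (Fin n) ℝ)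
    (X : Finset (Fin m)) (Y : Finset (Fin n)) : MemLp (fun ω => minor (A + B ω) X Y) 2 μ := by
  obtain ⟨ε, hε⟩ := exists_sign_minor_add_eq X Y
  simp_rw [hε]
  exact memLp_finsetSum _ fun P _ => memLp_finsetSum _ fun T _ =>
    ((hB.memLp _ _).const_mul _).const_mul _

lemma integral_minor_add_sq (hB : HasOrthogonalMinors B w μ) (A : Matrix (Fin m) (Fin n) ℝ)
    (X : Finset (Fin m)) (Y : Finset (Fin n)) :
    ∫ ω, minor (A + B ω) X Y ^ 2 ∂μ =
      ∑ P ∈ X.powerset, ∑ T ∈ Y.powerset, minor A P T ^ 2 * w (X \ P) (Y \ T) := by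
  obtain ⟨ε, hε⟩ := exists_sign_minor_add_eq X Y
  have hsign : ∀ P T, ((ε P T : ℤ) : ℝ) ^ 2 = 1 := fun P T => by
    rw [sq, ← Int.cast_mul, Int.units_coe_mul_self, Int.cast_one]
  simp_rw [hε, ← Finset.sum_product']
  rw [integral_sq_sum_of_pairwise_orthogonal
    fun z _ => ((hB.memLp _ _).const_mul _).const_mul _]
  · refine Finset.sum_congr rfl fun z _ => ?_
    simp_rw [mul_pow, hsign, one_mul]
    rw [integral_const_mul, hB.integral_sq]
  · intro z hz z' hz' hne
    simp only [Finset.mem_coe, Finset.mem_product, Finset.mem_powerset] at hz hz'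
    have hsdiff : ¬ (X \ z.1 = X \ z'.1 ∧ Y \ z.2 = Y \ z'.2) := fun h =>
      hne (Prod.ext ((sdiff_right_inj hz.1 hz'.1).mp h.1) ((sdiff_right_inj hz.2 hz'.2).mp h.2))
    simp_rw [← mul_assoc (Int.cast _ : ℝ)]
    simp_rw [mul_mul_mul_comm (_ * minor A _ _) _ (_ * minor A _ _)]
    rw [integral_const_mul, hB.integral_mul, if_neg hsdiff, mul_zero]

end HasOrthogonalMinors

end Moments

section Combinatorics

lemma sum_powerset_powerset_eq_sum_powersetCard {α β M : Type*} [AddCommMonoid M] {i : ℕ}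
    {X : Finset α} {Y : Finset β} (hX : X.card = i) (hY : Y.card = i)
    (F : Finset α → Finset β → M) (hF : ∀ P T, P.card ≠ T.card → F P T = 0) :
    ∑ P ∈ X.powerset, ∑ T ∈ Y.powerset, F P T =
      ∑ j ∈ Finset.range (i + 1), ∑ P ∈ X.powersetCard j, ∑ T ∈ Y.powersetCard j, F P T := by
  rw [Finset.sum_powerset, hX]
  refine Finset.sum_congr rfl fun j hj => Finset.sum_congr rfl fun P hP => ?_
  rw [Finset.sum_powerset, hY]
  refine Finset.sum_eq_single_of_mem j hj fun j' _ hne => Finset.sum_eq_zero fun T hT => hF P T ?_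
  rw [(Finset.mem_powersetCard.mp hP).2, (Finset.mem_powersetCard.mp hT).2]
  exact hne.symm

lemma sum_powersetCard_sum_powersetCard {α M : Type*} [DecidableEq α] [AddCommMonoid M]
    (Z : Finset α) {i j : ℕ} (hji : j ≤ i) (F : Finset α → Finset α → M) :
    ∑ X ∈ Z.powersetCard i, ∑ P ∈ X.powersetCard j, F P (X \ P) =
      ∑ P ∈ Z.powersetCard j, ∑ S ∈ (Z \ P).powersetCard (i - j), F P S := by
  rw [Finset.sum_sigma', Finset.sum_sigma']
  refine Finset.sum_bij' (fun z _ => ⟨z.2, z.1 \ z.2⟩) (fun z _ => ⟨z.1 ∪ z.2, z.1⟩) ?_ ?_ ?_ ?_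
    fun _ _ => rfl
  · rintro ⟨X, P⟩ h
    simp only [Finset.mem_sigma, Finset.mem_powersetCard] at h ⊢
    obtain ⟨⟨hXZ, rfl⟩, hPX, rfl⟩ := h
    exact ⟨⟨hPX.trans hXZ, rfl⟩, Finset.sdiff_subset_sdiff hXZ subset_rfl,
      Finset.card_sdiff_of_subset hPX⟩
  · rintro ⟨P, S⟩ h
    simp only [Finset.mem_sigma, Finset.mem_powersetCard, Finset.subset_sdiff] at h ⊢
    obtain ⟨⟨hPZ, rfl⟩, ⟨hSZ, hSP⟩, hS⟩ := h
    refine ⟨⟨Finset.union_subset hPZ hSZ, ?_⟩, Finset.subset_union_left, rfl⟩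
    rw [Finset.card_union_of_disjoint hSP.symm, hS, Nat.add_sub_cancel' hji]
  · rintro ⟨X, P⟩ h
    simp only [Finset.mem_sigma, Finset.mem_powersetCard] at h
    simp [Finset.union_sdiff_of_subset h.2.1]
  · rintro ⟨P, S⟩ h
    simp only [Finset.mem_sigma, Finset.mem_powersetCard, Finset.subset_sdiff] at h
    simp [Finset.union_sdiff_cancel_left h.2.1.2.symm]

lemma sum_powersetCard_sum_powersetCard₂ {α β M : Type*} [DecidableEq α] [DecidableEq β]
    [AddCommMonoid M] (Z : Finset α) (W : Finset β) {i j : ℕ} (hji : j ≤ i)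
    (F : Finset α → Finset β → Finset α → Finset β → M) :
    ∑ X ∈ Z.powersetCard i, ∑ Y ∈ W.powersetCard i,
        ∑ P ∈ X.powersetCard j, ∑ T ∈ Y.powersetCard j, F P T (X \ P) (Y \ T) =
      ∑ P ∈ Z.powersetCard j, ∑ T ∈ W.powersetCard j,
        ∑ S ∈ (Z \ P).powersetCard (i - j), ∑ U ∈ (W \ T).powersetCard (i - j), F P T S U := by
  calc
    _ = ∑ X ∈ Z.powersetCard i, ∑ P ∈ X.powersetCard j, ∑ T ∈ W.powersetCard j,
          ∑ U ∈ (W \ T).powersetCard (i - j), F P T (X \ P) U :=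
      Finset.sum_congr rfl fun X _ => by
        rw [Finset.sum_comm]
        exact Finset.sum_congr rfl fun P _ =>
          sum_powersetCard_sum_powersetCard W hji fun T U => F P T (X \ P) U
    _ = ∑ P ∈ Z.powersetCard j, ∑ S ∈ (Z \ P).powersetCard (i - j), ∑ T ∈ W.powersetCard j,
          ∑ U ∈ (W \ T).powersetCard (i - j), F P T S U :=
      sum_powersetCard_sum_powersetCard Z hji fun P S =>
        ∑ T ∈ W.powersetCard j, ∑ U ∈ (W \ T).powersetCard (i - j), F P T S U
    _ = _ := Finset.sum_congr rfl fun P _ => Finset.sum_comm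

lemma card_filter_subset_powersetCard_sdiff {α : Type*} [DecidableEq α] {Z I : Finset α}
    (hI : I ⊆ Z) (P : Finset α) (k : ℕ) :
    (((Z \ P).powersetCard k).filter (· ⊆ I)).card = (I.card - (P ∩ I).card).choose k := by
  have hfilter : ((Z \ P).powersetCard k).filter (· ⊆ I) = (I \ P).powersetCard k := by
    ext S
    simp only [Finset.mem_filter, Finset.mem_powersetCard, Finset.subset_sdiff]
    exact ⟨fun h => ⟨⟨h.2, h.1.1.2⟩, h.1.2⟩, fun h => ⟨⟨⟨h.1.1.trans hI, h.1.2⟩, h.2⟩, h.1.1⟩⟩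
  rw [hfilter, Finset.card_powersetCard, Finset.card_sdiff]

/-- The index set `{1,…,s} ⊆ {1,…,m}`, that is `{i | i < s}` in the zero-based indexing of
`Fin m`; for `s > m` this is everything. -/
def firstIndices (m s : ℕ) : Finset (Fin m) :=
  Finset.univ.filter fun i => (i : ℕ) < s

lemma mem_firstIndices {m s : ℕ} {i : Fin m} : i ∈ firstIndices m s ↔ (i : ℕ) < s := by
  simp [firstIndices]

lemma card_firstIndices (m s : ℕ) : (firstIndices m s).card = min m s :=
  Fin.card_filter_val_lt

lemma filter_val_lt_eq_inter_firstIndices {m : ℕ} (P : Finset (Fin m)) (s : ℕ) :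
    P.filter (fun i : Fin m => (i : ℕ) < s) = P ∩ firstIndices m s := by
  rw [firstIndices, Finset.inter_filter, Finset.inter_univ]

lemma map_castLEOrderEmb_univ {m s : ℕ} (hsm : s ≤ m) :
    Finset.univ.map (Fin.castLEOrderEmb hsm).toEmbedding = firstIndices m s := by
  ext i
  rw [mem_firstIndices, Finset.mem_map]
  exact ⟨fun ⟨a, _, ha⟩ => ha ▸ a.2, fun hi => ⟨⟨i, hi⟩, Finset.mem_univ _, rfl⟩⟩

lemma card_inter_firstIndices_le {m : ℕ} (P : Finset (Fin m)) (s : ℕ) :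
    (P ∩ firstIndices m s).card ≤ s :=
  (Finset.card_le_card Finset.inter_subset_right).trans <|
    (card_firstIndices m s).trans_le (min_le_right m s)

lemma sum_mul_Apq {m n : ℕ} (A : Matrix (Fin m) (Fin n) ℝ) (s r j : ℕ) (F : ℕ → ℕ → ℝ) :
    ∑ p ∈ Finset.range (s + 1), ∑ q ∈ Finset.range (r + 1), F p q * Apq A s r j p q =
      ∑ P ∈ Finset.univ.powersetCard j, ∑ T ∈ Finset.univ.powersetCard j,
        F (P ∩ firstIndices m s).card (T ∩ firstIndices n r).card * minor A P T ^ 2 := by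
  have hterm : ∀ p q, F p q * Apq A s r j p q =
      ∑ P ∈ Finset.univ.powersetCard j, ∑ T ∈ Finset.univ.powersetCard j,
        if (P ∩ firstIndices m s).card = p then
          if (T ∩ firstIndices n r).card = q then F p q * minor A P T ^ 2 else 0
        else 0 := by
    intro p q
    simp only [Apq, Finset.powersetCard_eq_filter, Finset.powerset_univ, Finset.sum_filter,
      Finset.mul_sum, filter_val_lt_eq_inter_firstIndices]
    refine Finset.sum_congr rfl fun P _ => ?_
    by_cases hP : P.card = j
    · simp only [hP, true_and, if_true, ite_and, mul_ite, mul_zero]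
    · simp [hP]
  simp_rw [hterm, Finset.sum_comm (s := Finset.range _) (t := Finset.powersetCard _ _)]
  refine Finset.sum_congr rfl fun P _ => Finset.sum_congr rfl fun T _ => ?_
  simp [card_inter_firstIndices_le]

end Combinatorics

section ExpectedCoefficients

lemma HasOrthogonalMinors.integral_coeff_detXI {Ω : Type*} [MeasurableSpace Ω] {μ : Measure Ω}
    {m n : ℕ} {B : Ω → Matrix (Fin m) (Fin n) ℝ} {w : Finset (Fin m) → Finset (Fin n) → ℝ}
    (hB : HasOrthogonalMinors B w μ) (A : Matrix (Fin m) (Fin n) ℝ) {i : ℕ} (hi : i ≤ n) :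
    ∫ ω, (detXI ((A + B ω)ᵀ * (A + B ω))).coeff (n - i) ∂μ =
      ∑ j ∈ Finset.range (i + 1),
        ∑ P ∈ Finset.univ.powersetCard j, ∑ T ∈ Finset.univ.powersetCard j,
          ∑ S ∈ (Finset.univ \ P).powersetCard (i - j),
            ∑ U ∈ (Finset.univ \ T).powersetCard (i - j), minor A P T ^ 2 * w S U := by
  have hint : ∀ X Y, Integrable (fun ω => minor (A + B ω) X Y ^ 2) μ :=
    fun X Y => (hB.memLp_minor_add A X Y).integrable_sq
  calc
    _ = ∑ X ∈ Finset.univ.powersetCard i, ∑ Y ∈ Finset.univ.powersetCard i,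
          ∫ ω, minor (A + B ω) X Y ^ 2 ∂μ := by
      simp_rw [detXI_transpose_mul_self_coeff _ hi]
      rw [integral_finsetSum _ fun X _ => integrable_finsetSum _ fun Y _ => hint X Y]
      exact Finset.sum_congr rfl fun X _ => integral_finsetSum _ fun Y _ => hint X Y
    _ = ∑ X ∈ Finset.univ.powersetCard i, ∑ Y ∈ Finset.univ.powersetCard i,
          ∑ j ∈ Finset.range (i + 1), ∑ P ∈ X.powersetCard j, ∑ T ∈ Y.powersetCard j,
            minor A P T ^ 2 * w (X \ P) (Y \ T) := by
      refine Finset.sum_congr rfl fun X hX => Finset.sum_congr rfl fun Y hY => ?_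
      rw [hB.integral_minor_add_sq]
      refine sum_powerset_powerset_eq_sum_powersetCard (Finset.mem_powersetCard.mp hX).2
        (Finset.mem_powersetCard.mp hY).2 (fun P T => minor A P T ^ 2 * w (X \ P) (Y \ T))
        fun P T hPT => ?_
      rw [minor_of_card_ne A hPT, zero_pow two_ne_zero, zero_mul]
    _ = ∑ j ∈ Finset.range (i + 1), ∑ X ∈ Finset.univ.powersetCard i,
          ∑ Y ∈ Finset.univ.powersetCard i, ∑ P ∈ X.powersetCard j, ∑ T ∈ Y.powersetCard j,
            minor A P T ^ 2 * w (X \ P) (Y \ T) := by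
      simp_rw [Finset.sum_comm (s := Finset.powersetCard i _) (t := Finset.range _)]
    _ = _ := Finset.sum_congr rfl fun j hj =>
      sum_powersetCard_sum_powersetCard₂ _ _ (Nat.lt_succ_iff.mp (Finset.mem_range.mp hj))
        fun P T S U => minor A P T ^ 2 * w S U

/-- The second moment `E[[Q̃]_{S,T}²]` of a minor of the zero extension `Q̃ = topLeft Q` of a
minor-orthogonal random `s × r` matrix `Q`. -/
noncomputable def topLeftWeight {m n : ℕ} (s r : ℕ) (S : Finset (Fin m)) (T : Finset (Fin n)) : ℝ :=
  if S.card = T.card ∧ S ⊆ firstIndices m s ∧ T ⊆ firstIndices n r then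
    ((s.choose S.card : ℕ) : ℝ)⁻¹
  else 0

lemma sum_topLeftWeight {m n s r : ℕ} (hsm : s ≤ m) (hrn : r ≤ n) (P : Finset (Fin m))
    (T : Finset (Fin n)) (k : ℕ) :
    ∑ S ∈ (Finset.univ \ P).powersetCard k, ∑ U ∈ (Finset.univ \ T).powersetCard k,
        topLeftWeight s r S U =
      (((s - (P ∩ firstIndices m s).card).choose k *
        (r - (T ∩ firstIndices n r).card).choose k : ℕ) : ℝ) / ((s.choose k : ℕ) : ℝ) := by
  have hterm : ∀ S ∈ (Finset.univ \ P).powersetCard k, ∀ U ∈ (Finset.univ \ T).powersetCard k,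
      topLeftWeight s r S U = (if S ⊆ firstIndices m s then 1 else 0) *
        (if U ⊆ firstIndices n r then 1 else 0) * ((s.choose k : ℕ) : ℝ)⁻¹ := by
    intro S hS U hU
    have hSk : S.card = k := (Finset.mem_powersetCard.mp hS).2
    have hUk : U.card = k := (Finset.mem_powersetCard.mp hU).2
    simp only [topLeftWeight, hSk, hUk, true_and, ite_and]
    split_ifs <;> simp
  rw [Finset.sum_congr rfl fun S hS => Finset.sum_congr rfl (hterm S hS)]
  simp_rw [← Finset.sum_mul, ← Finset.mul_sum, ← Finset.sum_mul, Finset.sum_boole,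
    card_filter_subset_powersetCard_sdiff (Finset.subset_univ _), card_firstIndices,
    min_eq_right hsm, min_eq_right hrn]
  rw [Nat.cast_mul, div_eq_mul_inv]

namespace MinorOrthogonal

variable {s r : ℕ} {μ : Measure (Matrix (Fin s) (Fin r) ℝ)}

lemma memLp_minor (hμ : MinorOrthogonal μ) (S : Finset (Fin s)) (T : Finset (Fin r)) :
    MemLp (fun Q => minor Q S T) 2 μ := by
  by_cases h : S.card = T.card
  · rw [memLp_two_iff_integrable_sq (measurable_minor S T).aestronglyMeasurable]
    -- A non-integrable square would have integral `0`, whereas the prescribed value is positive.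
    refine Integrable.of_integral_ne_zero ?_
    simp_rw [sq]
    rw [hμ S S T T h h, if_pos ⟨rfl, rfl⟩]
    exact inv_ne_zero (Nat.cast_ne_zero.mpr (Nat.choose_pos (card_finset_fin_le S)).ne')
  · simp [minor_of_card_ne _ h]

lemma hasOrthogonalMinors (hμ : MinorOrthogonal μ) :
    HasOrthogonalMinors id
      (fun S T => if S.card = T.card then ((s.choose S.card : ℕ) : ℝ)⁻¹ else 0) μ where
  memLp := hμ.memLp_minor
  integral_mul S U T V := by
    by_cases hST : S.card = T.card
    · by_cases hUV : U.card = V.card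
      · rw [if_pos hST]
        exact hμ S U T V hST hUV
      · have hne : ¬ (S = U ∧ T = V) := by
          rintro ⟨rfl, rfl⟩
          exact hUV hST
        simp [minor_of_card_ne _ hUV, hne]
    · simp [minor_of_card_ne _ hST, hST]

lemma hasOrthogonalMinors_topLeft {m n : ℕ} (hsm : s ≤ m) (hrn : r ≤ n) (hμ : MinorOrthogonal μ) :
    HasOrthogonalMinors (topLeft : _ → Matrix (Fin m) (Fin n) ℝ) (topLeftWeight s r) μ := by
  refine .of_submatrix (Fin.castLEOrderEmb hsm) (Fin.castLEOrderEmb hrn)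
    (w₀ := fun S T => if S.card = T.card then ((s.choose S.card : ℕ) : ℝ)⁻¹ else 0) ?_ ?_ ?_ ?_ ?_
  · convert hμ.hasOrthogonalMinors using 1
    funext Q
    ext i j
    simp [topLeft]
  · intro Q i hi j
    rw [map_castLEOrderEmb_univ, mem_firstIndices] at hi
    simp [topLeft, hi]
  · intro Q j hj i
    rw [map_castLEOrderEmb_univ, mem_firstIndices] at hj
    simp [topLeft, hj]
  · intro S T
    simp [topLeftWeight, ← map_castLEOrderEmb_univ hsm, ← map_castLEOrderEmb_univ hrn]
  · intro S T h
    rw [map_castLEOrderEmb_univ, map_castLEOrderEmb_univ] at h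
    exact if_neg fun h' => h h'.2

end MinorOrthogonal

theorem expected_coeff_formula_general
    {m n s r : ℕ} (hsm : s ≤ m) (hrn : r ≤ n) (a : ℝ) (A : Matrix (Fin m) (Fin n) ℝ)
    {μ : Measure (Matrix (Fin s) (Fin r) ℝ)} (hμ : MinorOrthogonal μ) {i : ℕ} (hi : i ≤ n) :
    (∫ Q, (detXI ((A + a • topLeft Q)ᵀ * (A + a • topLeft Q))).coeff (n - i) ∂μ) =
      ∑ j ∈ Finset.range (i + 1), ∑ p ∈ Finset.range (s + 1), ∑ q ∈ Finset.range (r + 1),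
        (((s - p).choose (i - j) * (r - q).choose (i - j) : ℕ) : ℝ) /
            ((s.choose (i - j) : ℕ) : ℝ) *
          (a ^ 2) ^ (i - j) * Apq A s r j p q := by
  rw [((hμ.hasOrthogonalMinors_topLeft hsm hrn).const_smul a).integral_coeff_detXI A hi]
  refine Finset.sum_congr rfl fun j _ => ?_
  rw [sum_mul_Apq A s r j fun p q => (((s - p).choose (i - j) * (r - q).choose (i - j) : ℕ) : ℝ) /
    ((s.choose (i - j) : ℕ) : ℝ) * (a ^ 2) ^ (i - j)]
  refine Finset.sum_congr rfl fun P _ => Finset.sum_congr rfl fun T _ => ?_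
  rw [← sum_topLeftWeight hsm hrn, mul_comm, mul_comm (∑ S ∈ _, _)]
  simp_rw [Finset.mul_sum]
  refine Finset.sum_congr rfl fun S hS => ?_
  rw [(Finset.mem_powersetCard.mp hS).2]

end ExpectedCoefficients

/-- **Explicit coefficients of the expected characteristic polynomial** (extension of
Cohen's computation).  For a minor-orthogonal random `s × r` matrix `Q` embedded in the
top-left block `Q̃`, writing
`E[det(x·I + (A + √c·Q̃)ᵀ(A + √c·Q̃))] = Σᵢ x^{n−i} cᵢ(A)`, one has
`cᵢ(A) = Σ_{j,p,q} (binom(s−p, i−j)·binom(r−q, i−j)/binom(s, i−j))·c^{i−j}·A^j_{p,q}`. -/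
theorem expected_coeff_formula
    (m n s r : ℕ) (hn : 1 ≤ n) (hmn : n ≤ m) (hsm : s ≤ m) (hrs : r ≤ s) (hrn : r ≤ n)
    (c : ℝ) (hc : 0 ≤ c)
    (A : Matrix (Fin m) (Fin n) ℝ)
    (μ : Measure (Matrix (Fin s) (Fin r) ℝ)) [IsProbabilityMeasure μ]
    (hμ : MinorOrthogonal μ) :
    ∀ i : ℕ, i ≤ n →
      (∫ Q, (detXI ((A + Real.sqrt c • topLeft Q)ᵀ *
          (A + Real.sqrt c • topLeft Q))).coeff (n - i) ∂μ) =
      ∑ j ∈ Finset.range (i + 1), ∑ p ∈ Finset.range (s + 1), ∑ q ∈ Finset.range (r + 1),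
        (((s - p).choose (i - j) * (r - q).choose (i - j) : ℕ) : ℝ) /
            ((s.choose (i - j) : ℕ) : ℝ) *
          c ^ (i - j) * Apq A s r j p q := by
  intro i hi
  simpa only [Real.sq_sqrt hc] using expected_coeff_formula_general hsm hrn (Real.sqrt c) A hμ hi
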